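/- arXiv:2512.08364 — 3 statements merged into one kernel-verified Lean document; each statement's English description precedes it below -/
import Mathlib

section
/- Let ρ*(t) = 1 + 2·cos( (1/3)·arccos(2t−1) + 4π/3 ) for t ∈ [0,1]. Then ∫_0^1 ( ∫_0^x 1/ρ*(t) dt )^{1/2} dx = (1/2)·(3/2)^{1/2}; in particular ρ* attains the minimal value (1/(p+1))·((p+2)/(p+1))^{p/2} with p = 1 of the functional J(ρ) = ∫_0^1 ( ∫_0^x 1/ρ(t) dt )^{p/2} dx over all probability densities ρ on [0,1]. -/
open MeasureTheory ENNReal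

/-!
Let `W(x) = ∫_0^x 1/ρ₀`, `G(x) = ∫_0^x 1/ρ`, `A(x) = ∫_0^x ρ/ρ₀²` and `s = p/2`. Cauchy–Schwarz
gives `W² ≤ A G`, and the weighted AM–GM inequality turns this into the tangent inequality
`(1 + s) W^s ≤ G^s + s W^(s-1) A`, an equality for `ρ = ρ₀`. Integrating over `x` and exchanging the
order of integration, the last term becomes `s ∫ (ρ(t)/ρ₀(t)²) ∫_t^1 W^(s-1) dx dt`. If `ρ₀`
satisfies the Euler–Lagrange equation `∫_t^1 W^(s-1) = J(ρ₀) ρ₀(t)²`, this equals `s J(ρ₀) ∫ ρ`,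
whence `J(ρ₀) ≤ J(ρ)` for every probability density `ρ`.

For `s = 1/2`, the triple-angle formula shows that `ρ*` solves `1 - (3ρ² - ρ³)/4 = t`, so
`dt = -(3/4) ρ (2 - ρ) dρ`, and the integrals of `1/ρ*`, `2 - ρ*` and `1/(2 - ρ*)` become integrals
of polynomials in `ρ`. They give `W = (3/8) (2 - ρ*)²`, the value of `J`, and the Euler–Lagrange
equation.
-/


lemma one_add_mul_rpow_le_of_sq_le_mul {W A G s : ℝ} (hW : 0 < W) (hA : 0 ≤ A) (hG : 0 ≤ G)
    (hs : 0 < s) (hWAG : W ^ 2 ≤ A * G) :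
    (1 + s) * W ^ s ≤ G ^ s + s * (W ^ (s - 1) * A) := by
  have hWs : 0 ≤ W ^ (s - 1) * A := by positivity
  have amgm := Real.geom_mean_le_arith_mean2_weighted (w₁ := 1 / (1 + s)) (w₂ := s / (1 + s))
    (by positivity) (by positivity) (Real.rpow_nonneg hG s) hWs (by field_simp)
  have geom_mean_ge : W ^ s ≤ (G ^ s) ^ (1 / (1 + s)) * (W ^ (s - 1) * A) ^ (s / (1 + s)) := by
    calc W ^ s = (W ^ (s - 1) * W ^ 2) ^ (s / (1 + s)) := by
          rw [← Real.rpow_two, ← Real.rpow_add hW, ← Real.rpow_mul hW.le]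
          congr 1
          field_simp
          ring
      _ ≤ (G * (W ^ (s - 1) * A)) ^ (s / (1 + s)) := by
          rw [mul_left_comm, mul_comm G]
          gcongr
      _ = (G ^ s) ^ (1 / (1 + s)) * (W ^ (s - 1) * A) ^ (s / (1 + s)) := by
          rw [Real.mul_rpow hG hWs, ← Real.rpow_mul hG, mul_one_div]
  calc (1 + s) * W ^ s
      ≤ (1 + s) * (1 / (1 + s) * G ^ s + s / (1 + s) * (W ^ (s - 1) * A)) := by
        gcongr
        exact geom_mean_ge.trans amgm
    _ = G ^ s + s * (W ^ (s - 1) * A) := by field_simp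

lemma one_add_ofReal_mul_rpow_le_of_sq_le_mul {W A G : ℝ≥0∞} {s : ℝ} (hA : A ≠ ∞) (hG : G ≠ ∞)
    (hs : 0 < s) (hWAG : W ^ 2 ≤ A * G) :
    (1 + ENNReal.ofReal s) * W ^ s ≤ G ^ s + ENNReal.ofReal s * (W ^ (s - 1) * A) := by
  rcases eq_or_ne W 0 with rfl | hW₀
  · simp [hs]
  have hW : W ≠ ∞ := by
    rintro rfl
    simp [ENNReal.mul_eq_top, hA, hG] at hWAG
  have hW_pos := ENNReal.toReal_pos hW₀ hW
  have hWAG_real : W.toReal ^ 2 ≤ A.toReal * G.toReal := by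
    simpa only [toReal_pow, toReal_mul] using toReal_mono (mul_ne_top hA hG) hWAG
  rw [← ofReal_toReal hW, ← ofReal_toReal hA, ← ofReal_toReal hG, ← ofReal_one,
    ofReal_rpow_of_pos hW_pos, ofReal_rpow_of_pos hW_pos,
    ofReal_rpow_of_nonneg toReal_nonneg hs.le, ← ofReal_add zero_le_one hs.le,
    ← ofReal_mul (by positivity), ← ofReal_mul (by positivity), ← ofReal_mul hs.le,
    ← ofReal_add (by positivity) (by positivity)]
  exact ofReal_le_ofReal
    (one_add_mul_rpow_le_of_sq_le_mul hW_pos toReal_nonneg toReal_nonneg hs hWAG_real)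

lemma sq_lintegral_le_lintegral_sq_mul_mul_lintegral_inv {α : Type*} [MeasurableSpace α]
    {μ : Measure α} {f ρ : α → ℝ≥0∞} (hf : AEMeasurable f μ) (hρ : AEMeasurable ρ μ)
    (hfρ_top : ∫⁻ t, f t ^ 2 * ρ t ∂μ ≠ ∞) (hρ_top : ∫⁻ t, (ρ t)⁻¹ ∂μ ≠ ∞) :
    (∫⁻ t, f t ∂μ) ^ 2 ≤ (∫⁻ t, f t ^ 2 * ρ t ∂μ) * ∫⁻ t, (ρ t)⁻¹ ∂μ := by
  have hfρ : AEMeasurable (fun t ↦ f t ^ 2 * ρ t) μ := (hf.pow_const 2).mul hρ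
  have le_geom_mean : ∀ᵐ t ∂μ,
      f t ≤ (f t ^ 2 * ρ t) ^ (1 / 2 : ℝ) * (ρ t)⁻¹ ^ (1 / 2 : ℝ) := by
    filter_upwards [ae_lt_top' hfρ hfρ_top, ae_lt_top' hρ.inv hρ_top] with t hfρt hρt
    rcases eq_or_ne (ρ t) ∞ with h_top | h_top
    · have : f t = 0 := by
        by_contra h_ne
        simp [h_top, h_ne, mul_top] at hfρt
      simp [this]
    have h_zero : ρ t ≠ 0 := by simpa using hρt.ne
    rw [← mul_rpow_of_nonneg _ _ (by norm_num), mul_assoc, ENNReal.mul_inv_cancel h_zero h_top,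
      mul_one, ← rpow_two, ← rpow_mul]
    norm_num
  calc (∫⁻ t, f t ∂μ) ^ 2
      ≤ ((∫⁻ t, f t ^ 2 * ρ t ∂μ) ^ (1 / 2 : ℝ) * (∫⁻ t, (ρ t)⁻¹ ∂μ) ^ (1 / 2 : ℝ)) ^ 2 := by
        gcongr
        exact (lintegral_mono_ae le_geom_mean).trans
          (lintegral_mul_norm_pow_le hfρ hρ.inv (by norm_num) (by norm_num) (by norm_num))
    _ = (∫⁻ t, f t ^ 2 * ρ t ∂μ) * ∫⁻ t, (ρ t)⁻¹ ∂μ := by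
        rw [mul_pow, ← rpow_two, ← rpow_two, ← rpow_mul, ← rpow_mul]
        norm_num

lemma one_add_ofReal_mul_rpow_lintegral_le {α : Type*} [MeasurableSpace α] {μ : Measure α}
    {f ρ : α → ℝ≥0∞} {s : ℝ} (hf : AEMeasurable f μ) (hρ : AEMeasurable ρ μ) (hs : 0 < s)
    (hf_top : ∫⁻ t, f t ∂μ ≠ ∞) :
    (1 + ENNReal.ofReal s) * (∫⁻ t, f t ∂μ) ^ s ≤ (∫⁻ t, (ρ t)⁻¹ ∂μ) ^ s
      + ENNReal.ofReal s * ((∫⁻ t, f t ∂μ) ^ (s - 1) * ∫⁻ t, f t ^ 2 * ρ t ∂μ) := by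
  rcases eq_or_ne (∫⁻ t, f t ∂μ) 0 with hf_zero | hf_zero
  · simp [hf_zero, hs]
  rcases eq_or_ne (∫⁻ t, (ρ t)⁻¹ ∂μ) ∞ with hρ_top | hρ_top
  · simp [hρ_top, hs]
  rcases eq_or_ne (∫⁻ t, f t ^ 2 * ρ t ∂μ) ∞ with hfρ_top | hfρ_top
  · have : (∫⁻ t, f t ∂μ) ^ (s - 1) ≠ 0 := by simp [rpow_eq_zero_iff, hf_zero, hf_top]
    simp [hfρ_top, mul_top, this, hs]
  exact one_add_ofReal_mul_rpow_le_of_sq_le_mul hfρ_top hρ_top hs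
    (sq_lintegral_le_lintegral_sq_mul_mul_lintegral_inv hf hρ hfρ_top hρ_top)

section ReciprocalPrimitive

variable {α : Type*} [Preorder α] [MeasurableSpace α]

/-- The inner integral `x ↦ ∫_{t < x} 1 / ρ(t) dμ(t)` of the discrepancy functional. It is valued in
`ℝ≥0∞`, so that a density vanishing on a set of positive measure is charged `∞`. -/
noncomputable def reciprocalPrimitive (μ : Measure α) (ρ : α → ℝ≥0∞) (x : α) : ℝ≥0∞ :=
  ∫⁻ t in Set.Iio x, (ρ t)⁻¹ ∂μ

/-- The functional `J(ρ) = ∫ (∫_{t < x} 1 / ρ(t) dμ(t)) ^ s dμ(x)` of a density `ρ` with respect to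
`μ`. The paper's functional with parameter `p` has `s = p / 2` and `μ` Lebesgue measure on
`[0, 1]`. -/
noncomputable def discrepancyFunctional (μ : Measure α) (s : ℝ) (ρ : α → ℝ≥0∞) : ℝ≥0∞ :=
  ∫⁻ x, reciprocalPrimitive μ ρ x ^ s ∂μ

end ReciprocalPrimitive

section LinearOrder

variable {α : Type*} [LinearOrder α] [TopologicalSpace α] [OrderClosedTopology α]
  [MeasurableSpace α] [BorelSpace α] {μ : Measure α}

lemma measurable_reciprocalPrimitive (ρ : α → ℝ≥0∞) : Measurable (reciprocalPrimitive μ ρ) :=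
  Monotone.measurable fun _ _ hxy ↦ lintegral_mono_set (Set.Iio_subset_Iio hxy)

lemma reciprocalPrimitive_restrict_Icc (ρ : α → ℝ≥0∞) {a b x : α} (hx : x ≤ b) :
    reciprocalPrimitive (μ.restrict (Set.Icc a b)) ρ x = ∫⁻ t in Set.Ico a x, (ρ t)⁻¹ ∂μ := by
  have inter_eq : Set.Iio x ∩ Set.Icc a b = Set.Ico a x := by
    ext t
    simp only [Set.mem_inter_iff, Set.mem_Iio, Set.mem_Icc, Set.mem_Ico]
    exact ⟨fun ⟨htx, hat, _⟩ ↦ ⟨hat, htx⟩, fun ⟨hat, htx⟩ ↦ ⟨htx, hat, htx.le.trans hx⟩⟩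
  rw [reciprocalPrimitive, Measure.restrict_restrict measurableSet_Iio, inter_eq]

lemma discrepancyFunctional_restrict_Icc (s : ℝ) (ρ : α → ℝ≥0∞) (a b : α) :
    discrepancyFunctional (μ.restrict (Set.Icc a b)) s ρ
      = ∫⁻ x in Set.Icc a b, (∫⁻ t in Set.Ico a x, 1 / ρ t ∂μ) ^ s ∂μ := by
  refine setLIntegral_congr_fun measurableSet_Icc fun x hx ↦ ?_
  simp only [reciprocalPrimitive_restrict_Icc ρ hx.2, one_div]

variable [SecondCountableTopology α] [SFinite μ]

lemma lintegral_mul_lintegral_Iio {u v : α → ℝ≥0∞} (hu : AEMeasurable u μ)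
    (hv : AEMeasurable v μ) :
    ∫⁻ x, v x * ∫⁻ t in Set.Iio x, u t ∂μ ∂μ = ∫⁻ t, u t * ∫⁻ x in Set.Ioi t, v x ∂μ ∂μ := by
  have h_meas : AEMeasurable (Function.uncurry fun x t ↦ (Set.Iio x).indicator (v x * u ·) t)
      (μ.prod μ) :=
    ((hv.comp_fst.mul hu.comp_snd).indicator (measurableSet_lt measurable_snd measurable_fst))
  calc ∫⁻ x, v x * ∫⁻ t in Set.Iio x, u t ∂μ ∂μ
      = ∫⁻ x, ∫⁻ t, (Set.Iio x).indicator (v x * u ·) t ∂μ ∂μ := by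
        simp_rw [lintegral_indicator measurableSet_Iio, lintegral_const_mul'' _ hu.restrict]
    _ = ∫⁻ t, ∫⁻ x, (Set.Ioi t).indicator (u t * v ·) x ∂μ ∂μ := by
        rw [lintegral_lintegral_swap h_meas]
        simp only [Set.indicator_apply, Set.mem_Iio, Set.mem_Ioi, mul_comm]
    _ = ∫⁻ t, u t * ∫⁻ x in Set.Ioi t, v x ∂μ ∂μ := by
        simp_rw [lintegral_indicator measurableSet_Ioi, lintegral_const_mul'' _ hv.restrict]

lemma lintegral_rpow_mul_lintegral_le_discrepancyFunctional {s : ℝ}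
    {ρ₀ ρ : α → ℝ≥0∞} (hρ₀ : AEMeasurable ρ₀ μ) (hρ : AEMeasurable ρ μ)
    (euler_lagrange : ∀ᵐ t ∂μ, ∫⁻ x in Set.Ioi t, reciprocalPrimitive μ ρ₀ x ^ (s - 1) ∂μ
      ≤ discrepancyFunctional μ s ρ₀ * ρ₀ t ^ 2)
    (hρ_mass : ∫⁻ t, ρ t ∂μ ≤ 1) :
    ∫⁻ x, reciprocalPrimitive μ ρ₀ x ^ (s - 1) * ∫⁻ t in Set.Iio x, (ρ₀ t)⁻¹ ^ 2 * ρ t ∂μ ∂μ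
      ≤ discrepancyFunctional μ s ρ₀ := by
  calc ∫⁻ x, reciprocalPrimitive μ ρ₀ x ^ (s - 1) * ∫⁻ t in Set.Iio x, (ρ₀ t)⁻¹ ^ 2 * ρ t ∂μ ∂μ
      = ∫⁻ t, (ρ₀ t)⁻¹ ^ 2 * ρ t * ∫⁻ x in Set.Ioi t, reciprocalPrimitive μ ρ₀ x ^ (s - 1) ∂μ ∂μ :=
        lintegral_mul_lintegral_Iio ((hρ₀.inv.pow_const 2).mul hρ)
          ((measurable_reciprocalPrimitive ρ₀).pow_const _).aemeasurable
    _ ≤ ∫⁻ t, discrepancyFunctional μ s ρ₀ * ρ t ∂μ := by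
        refine lintegral_mono_ae (euler_lagrange.mono fun t ht ↦ ?_)
        calc (ρ₀ t)⁻¹ ^ 2 * ρ t * _
            ≤ (ρ₀ t)⁻¹ ^ 2 * ρ t * (discrepancyFunctional μ s ρ₀ * ρ₀ t ^ 2) := by gcongr
          _ = ((ρ₀ t)⁻¹ * ρ₀ t) ^ 2 * (discrepancyFunctional μ s ρ₀ * ρ t) := by ring
          _ ≤ 1 ^ 2 * (discrepancyFunctional μ s ρ₀ * ρ t) := by
              gcongr
              exact ENNReal.inv_mul_le_one _
          _ = discrepancyFunctional μ s ρ₀ * ρ t := by rw [one_pow, one_mul]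
    _ = discrepancyFunctional μ s ρ₀ * ∫⁻ t, ρ t ∂μ := lintegral_const_mul'' _ hρ
    _ ≤ discrepancyFunctional μ s ρ₀ := mul_le_of_le_one_right' hρ_mass

theorem discrepancyFunctional_le_of_euler_lagrange {s : ℝ} {ρ₀ ρ : α → ℝ≥0∞}
    (hs : 0 < s) (hρ₀ : AEMeasurable ρ₀ μ) (hρ : AEMeasurable ρ μ)
    (h_finite : discrepancyFunctional μ s ρ₀ ≠ ∞)
    (euler_lagrange : ∀ᵐ t ∂μ, ∫⁻ x in Set.Ioi t, reciprocalPrimitive μ ρ₀ x ^ (s - 1) ∂μ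
      ≤ discrepancyFunctional μ s ρ₀ * ρ₀ t ^ 2)
    (hρ_mass : ∫⁻ t, ρ t ∂μ ≤ 1) :
    discrepancyFunctional μ s ρ₀ ≤ discrepancyFunctional μ s ρ := by
  have hW := measurable_reciprocalPrimitive (μ := μ) ρ₀
  have primitive_ne_top : ∀ᵐ x ∂μ, reciprocalPrimitive μ ρ₀ x ≠ ∞ := by
    filter_upwards [ae_lt_top (hW.pow_const s) h_finite] with x hx h_top
    simp [h_top, hs] at hx
  have pointwise : ∀ᵐ x ∂μ, (1 + ENNReal.ofReal s) * reciprocalPrimitive μ ρ₀ x ^ s ≤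
      reciprocalPrimitive μ ρ x ^ s + ENNReal.ofReal s *
        (reciprocalPrimitive μ ρ₀ x ^ (s - 1) * ∫⁻ t in Set.Iio x, (ρ₀ t)⁻¹ ^ 2 * ρ t ∂μ) :=
    primitive_ne_top.mono fun x hx ↦
      one_add_ofReal_mul_rpow_lintegral_le hρ₀.inv.restrict hρ.restrict hs hx
  have integrated : (1 + ENNReal.ofReal s) * discrepancyFunctional μ s ρ₀ ≤
      discrepancyFunctional μ s ρ + ENNReal.ofReal s * discrepancyFunctional μ s ρ₀ := by
    calc (1 + ENNReal.ofReal s) * discrepancyFunctional μ s ρ₀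
        = ∫⁻ x, (1 + ENNReal.ofReal s) * reciprocalPrimitive μ ρ₀ x ^ s ∂μ :=
          (lintegral_const_mul _ (hW.pow_const s)).symm
      _ ≤ _ := lintegral_mono_ae pointwise
      _ = discrepancyFunctional μ s ρ + ENNReal.ofReal s *
            ∫⁻ x, reciprocalPrimitive μ ρ₀ x ^ (s - 1) *
              ∫⁻ t in Set.Iio x, (ρ₀ t)⁻¹ ^ 2 * ρ t ∂μ ∂μ := by
          rw [lintegral_add_left ((measurable_reciprocalPrimitive ρ).pow_const s),
            lintegral_const_mul' _ _ ofReal_ne_top, discrepancyFunctional]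
      _ ≤ _ := by
          gcongr
          exact lintegral_rpow_mul_lintegral_le_discrepancyFunctional hρ₀ hρ euler_lagrange hρ_mass
  rw [add_mul, one_mul] at integrated
  exact (ENNReal.add_le_add_iff_right (mul_ne_top ofReal_ne_top h_finite)).1 integrated

end LinearOrder

lemma lintegral_ofReal_eq_ofReal_sub_of_hasDerivAt {F f : ℝ → ℝ} {a b : ℝ} (hab : a ≤ b)
    (hF : ContinuousOn F (Set.Icc a b)) (hderiv : ∀ x ∈ Set.Ioo a b, HasDerivAt F (f x) x)
    (hf : ∀ x ∈ Set.Ioo a b, 0 ≤ f x) :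
    ∫⁻ x in Set.Ioo a b, ENNReal.ofReal (f x) = ENNReal.ofReal (F b - F a) := by
  have hint : IntegrableOn f (Set.Ioc a b) :=
    intervalIntegral.integrableOn_deriv_of_nonneg hF hderiv hf
  rw [← intervalIntegral.integral_eq_sub_of_hasDerivAt_of_le hab hF hderiv
      ((intervalIntegrable_iff_integrableOn_Ioc_of_le hab).2 hint),
    intervalIntegral.integral_of_le hab, integral_Ioc_eq_integral_Ioo,
    ofReal_integral_eq_lintegral_ofReal (hint.mono_set Set.Ioo_subset_Ioc_self)
      (ae_restrict_of_forall_mem measurableSet_Ioo hf)]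

/-- The density `ρ*` minimizing the functional for `p = 1`: the trigonometric form of the root in
`[0, 2]` of the cubic equation `1 - (3 r ^ 2 - r ^ 3) / 4 = t`. It is constant on
each side of `[0, 1]`, since `Real.arccos` is constant on each side of `[-1, 1]`. -/
noncomputable def optimalDensity (t : ℝ) : ℝ :=
  1 + 2 * Real.cos ((1 / 3) * Real.arccos (2 * t - 1) + 4 * Real.pi / 3)

lemma continuous_optimalDensity : Continuous optimalDensity := by
  unfold optimalDensity
  fun_prop

lemma optimalDensity_zero : optimalDensity 0 = 2 := by
  have angle : 1 / 3 * Real.pi + 4 * Real.pi / 3 = 2 * Real.pi - Real.pi / 3 := by ring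
  rw [optimalDensity, mul_zero, zero_sub, Real.arccos_neg_one, angle, Real.cos_two_pi_sub,
    Real.cos_pi_div_three]
  norm_num

lemma optimalDensity_one : optimalDensity 1 = 0 := by
  have angle : 1 / 3 * 0 + 4 * Real.pi / 3 = Real.pi / 3 + Real.pi := by ring
  have two_sub_one : (2 * 1 - 1 : ℝ) = 1 := by norm_num
  rw [optimalDensity, two_sub_one, Real.arccos_one, angle, Real.cos_add_pi, Real.cos_pi_div_three]
  norm_num

lemma optimalDensity_mem_Ioo {t : ℝ} (ht : t ∈ Set.Ioo 0 1) :
    optimalDensity t ∈ Set.Ioo 0 2 := by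
  set θ := Real.arccos (2 * t - 1) with hθ
  have θ_pos : 0 < θ := Real.arccos_pos.2 (by linarith [ht.2])
  have θ_lt_pi : θ < Real.pi := Real.arccos_lt_pi.2 (by linarith [ht.1])
  have density_eq : optimalDensity t = 1 - 2 * Real.cos (1 / 3 * θ + Real.pi / 3) := by
    have angle : 1 / 3 * θ + 4 * Real.pi / 3 = 1 / 3 * θ + Real.pi / 3 + Real.pi := by ring
    rw [optimalDensity, ← hθ, angle, Real.cos_add_pi]
    ring
  have cos_lt : Real.cos (1 / 3 * θ + Real.pi / 3) < 1 / 2 := by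
    rw [← Real.cos_pi_div_three]
    exact Real.cos_lt_cos_of_nonneg_of_le_pi (by positivity) (by linarith) (by linarith)
  have lt_cos : -(1 / 2) < Real.cos (1 / 3 * θ + Real.pi / 3) := by
    rw [← Real.cos_pi_div_three, ← Real.cos_pi_sub]
    exact Real.cos_lt_cos_of_nonneg_of_le_pi (by linarith) (by linarith) (by linarith)
  rw [density_eq]
  constructor <;> linarith

lemma optimalDensity_mem_Icc {t : ℝ} (ht : t ∈ Set.Icc 0 1) :
    optimalDensity t ∈ Set.Icc 0 2 := by
  rcases Set.eq_endpoints_or_mem_Ioo_of_mem_Icc ht with rfl | rfl | ht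
  · simp [optimalDensity_zero]
  · simp [optimalDensity_one]
  · exact Set.Ioo_subset_Icc_self (optimalDensity_mem_Ioo ht)

lemma cubic_optimalDensity {t : ℝ} (ht : t ∈ Set.Icc 0 1) :
    1 - (3 * optimalDensity t ^ 2 - optimalDensity t ^ 3) / 4 = t := by
  set φ := 1 / 3 * Real.arccos (2 * t - 1) + 4 * Real.pi / 3 with hφ
  have triple_angle : 3 * φ = Real.arccos (2 * t - 1) + (2 : ℕ) * (2 * Real.pi) := by
    rw [hφ]
    push_cast
    ring
  have cos_triple : 2 * t - 1 = 4 * Real.cos φ ^ 3 - 3 * Real.cos φ := by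
    rw [← Real.cos_three_mul, triple_angle, Real.cos_add_nat_mul_two_pi,
      Real.cos_arccos (by linarith [ht.1]) (by linarith [ht.2])]
  rw [optimalDensity, ← hφ]
  linear_combination (-1 / 2) * cos_triple

lemma hasDerivAt_optimalDensity {t : ℝ} (ht : t ∈ Set.Ioo 0 1) :
    HasDerivAt optimalDensity (-(3 / 4 * (optimalDensity t * (2 - optimalDensity t))))⁻¹ t := by
  obtain ⟨h_pos, h_lt⟩ := optimalDensity_mem_Ioo ht
  have cubic_deriv (r : ℝ) :
      HasDerivAt (fun r : ℝ ↦ 1 - (3 * r ^ 2 - r ^ 3) / 4) (-(3 / 4 * (r * (2 - r)))) r := by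
    convert! ((((hasDerivAt_pow 2 r).const_mul 3).sub (hasDerivAt_pow 3 r)).div_const 4).const_sub 1
      using 1
    push_cast
    ring
  refine (cubic_deriv _).of_local_left_inverse continuous_optimalDensity.continuousAt
    (neg_ne_zero.2 (mul_pos (by norm_num) (mul_pos h_pos (sub_pos.2 h_lt))).ne') ?_
  filter_upwards [Icc_mem_nhds ht.1 ht.2] with s hs using cubic_optimalDensity hs

lemma lintegral_ofReal_comp_optimalDensity {F g : ℝ → ℝ} {a b : ℝ} (ha : 0 ≤ a) (hab : a ≤ b)
    (hb : b ≤ 1) (hF : Continuous F)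
    (hderiv : ∀ r ∈ Set.Ioo 0 2, HasDerivAt F (-(3 / 4 * (r * (2 - r))) * g r) r)
    (hg : ∀ r ∈ Set.Ioo 0 2, 0 ≤ g r) :
    ∫⁻ x in Set.Ioo a b, ENNReal.ofReal (g (optimalDensity x))
      = ENNReal.ofReal (F (optimalDensity b) - F (optimalDensity a)) := by
  have sub_unit : Set.Ioo a b ⊆ Set.Ioo 0 1 := Set.Ioo_subset_Ioo ha hb
  refine lintegral_ofReal_eq_ofReal_sub_of_hasDerivAt (F := F ∘ optimalDensity) hab
    (hF.comp continuous_optimalDensity).continuousOn (fun x hx ↦ ?_)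
    fun x hx ↦ hg _ (optimalDensity_mem_Ioo (sub_unit hx))
  obtain ⟨h_pos, h_lt⟩ := optimalDensity_mem_Ioo (sub_unit hx)
  convert! (hderiv _ ⟨h_pos, h_lt⟩).comp x (hasDerivAt_optimalDensity (sub_unit hx)) using 1
  field_simp [(sub_pos.2 h_lt).ne']

lemma lintegral_inv_optimalDensity {x : ℝ} (hx : x ∈ Set.Icc 0 1) :
    ∫⁻ t in Set.Ico 0 x, (ENNReal.ofReal (optimalDensity t))⁻¹
      = ENNReal.ofReal (3 / 8 * (2 - optimalDensity x) ^ 2) := by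
  calc ∫⁻ t in Set.Ico 0 x, (ENNReal.ofReal (optimalDensity t))⁻¹
      = ∫⁻ t in Set.Ioo 0 x, ENNReal.ofReal (optimalDensity t)⁻¹ := by
        rw [setLIntegral_congr Ioo_ae_eq_Ico.symm]
        exact setLIntegral_congr_fun measurableSet_Ioo fun t ht ↦
          (ofReal_inv_of_pos (optimalDensity_mem_Ioo ⟨ht.1, ht.2.trans_le hx.2⟩).1).symm
    _ = ENNReal.ofReal (3 / 8 * (2 - optimalDensity x) ^ 2
          - 3 / 8 * (2 - optimalDensity 0) ^ 2) := by
        refine lintegral_ofReal_comp_optimalDensity (F := fun r ↦ 3 / 8 * (2 - r) ^ 2)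
          (g := fun r ↦ r⁻¹) le_rfl hx.1 hx.2 (by fun_prop) (fun r hr ↦ ?_)
          fun r hr ↦ inv_nonneg.2 hr.1.le
        have hr_ne : r ≠ 0 := hr.1.ne'
        convert! (((hasDerivAt_id r).const_sub 2).pow 2).const_mul (3 / 8) using 1
        simp only [id_eq]
        field_simp
        ring
    _ = ENNReal.ofReal (3 / 8 * (2 - optimalDensity x) ^ 2) := by
        simp [optimalDensity_zero]

lemma lintegral_two_sub_optimalDensity :
    ∫⁻ x in Set.Icc 0 1, ENNReal.ofReal (2 - optimalDensity x) = 1 := by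
  rw [setLIntegral_congr Ioo_ae_eq_Icc.symm,
    lintegral_ofReal_comp_optimalDensity (F := fun r ↦ -(3 / 2 * r ^ 2 - r ^ 3 + 3 / 16 * r ^ 4))
      (g := fun r ↦ 2 - r) le_rfl zero_le_one le_rfl (by fun_prop) (fun r _ ↦ ?_)
      fun r hr ↦ sub_nonneg.2 hr.2.le]
  · norm_num [optimalDensity_zero, optimalDensity_one]
  · convert! ((((hasDerivAt_pow 2 r).const_mul (3 / 2)).sub (hasDerivAt_pow 3 r)).add
      ((hasDerivAt_pow 4 r).const_mul (3 / 16))).neg using 1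
    push_cast
    ring

lemma lintegral_inv_two_sub_optimalDensity {t : ℝ} (ht : t ∈ Set.Icc 0 1) :
    ∫⁻ x in Set.Ioc t 1, (ENNReal.ofReal (2 - optimalDensity x))⁻¹
      = ENNReal.ofReal (3 / 8 * optimalDensity t ^ 2) := by
  calc ∫⁻ x in Set.Ioc t 1, (ENNReal.ofReal (2 - optimalDensity x))⁻¹
      = ∫⁻ x in Set.Ioo t 1, ENNReal.ofReal (2 - optimalDensity x)⁻¹ := by
        rw [setLIntegral_congr Ioo_ae_eq_Ioc.symm]
        exact setLIntegral_congr_fun measurableSet_Ioo fun x hx ↦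
          (ofReal_inv_of_pos
            (sub_pos.2 (optimalDensity_mem_Ioo ⟨ht.1.trans_lt hx.1, hx.2⟩).2)).symm
    _ = ENNReal.ofReal (-(3 / 8 * optimalDensity 1 ^ 2) - -(3 / 8 * optimalDensity t ^ 2)) := by
        refine lintegral_ofReal_comp_optimalDensity (F := fun r ↦ -(3 / 8 * r ^ 2))
          (g := fun r ↦ (2 - r)⁻¹) ht.1 ht.2 le_rfl (by fun_prop) (fun r hr ↦ ?_)
          fun r hr ↦ inv_nonneg.2 (sub_nonneg.2 hr.2.le)
        have hr_ne : 2 - r ≠ 0 := (sub_pos.2 hr.2).ne'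
        convert! ((hasDerivAt_pow 2 r).const_mul (3 / 8)).neg using 1
        push_cast
        field_simp
        ring
    _ = ENNReal.ofReal (3 / 8 * optimalDensity t ^ 2) := by
        simp [optimalDensity_one]

/-- The minimum `(1 / (p + 1)) ((p + 2) / (p + 1)) ^ (p / 2)` of the functional, at `p = 1`. -/
noncomputable def minimalDiscrepancy : ℝ := 1 / 2 * √(3 / 2)

lemma minimalDiscrepancy_pos : 0 < minimalDiscrepancy := by
  unfold minimalDiscrepancy
  positivity

lemma minimalDiscrepancy_sq : minimalDiscrepancy ^ 2 = 3 / 8 := by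
  rw [minimalDiscrepancy, mul_pow, Real.sq_sqrt (by norm_num)]
  norm_num

lemma reciprocalPrimitive_optimalDensity_rpow_half {x : ℝ} (hx : x ∈ Set.Icc 0 1) :
    reciprocalPrimitive (volume.restrict (Set.Icc 0 1))
        (fun t ↦ ENNReal.ofReal (optimalDensity t)) x ^ (1 / 2 : ℝ)
      = ENNReal.ofReal minimalDiscrepancy * ENNReal.ofReal (2 - optimalDensity x) := by
  have h_nonneg : 0 ≤ 2 - optimalDensity x := sub_nonneg.2 (optimalDensity_mem_Icc hx).2
  have h_min_nonneg : 0 ≤ minimalDiscrepancy := minimalDiscrepancy_pos.le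
  rw [reciprocalPrimitive_restrict_Icc _ hx.2, lintegral_inv_optimalDensity hx,
    ← minimalDiscrepancy_sq, ← mul_pow, ofReal_rpow_of_nonneg (by positivity) (by norm_num),
    ← Real.sqrt_eq_rpow, Real.sqrt_sq (by positivity), ofReal_mul h_min_nonneg]

lemma discrepancyFunctional_optimalDensity :
    discrepancyFunctional (volume.restrict (Set.Icc 0 1)) (1 / 2)
        (fun t ↦ ENNReal.ofReal (optimalDensity t))
      = ENNReal.ofReal minimalDiscrepancy := by
  rw [discrepancyFunctional, setLIntegral_congr_fun measurableSet_Icc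
      fun x hx ↦ reciprocalPrimitive_optimalDensity_rpow_half hx,
    lintegral_const_mul' _ _ ofReal_ne_top, lintegral_two_sub_optimalDensity, mul_one]

lemma euler_lagrange_optimalDensity {t : ℝ} (ht : t ∈ Set.Icc 0 1) :
    ∫⁻ x in Set.Ioi t, reciprocalPrimitive (volume.restrict (Set.Icc 0 1))
        (fun t ↦ ENNReal.ofReal (optimalDensity t)) x ^ (1 / 2 - 1 : ℝ)
        ∂volume.restrict (Set.Icc 0 1)
      = ENNReal.ofReal minimalDiscrepancy * ENNReal.ofReal (optimalDensity t) ^ 2 := by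
  have h_min_pos := minimalDiscrepancy_pos
  have inter_eq : Set.Ioi t ∩ Set.Icc 0 1 = Set.Ioc t 1 := by
    ext x
    simp only [Set.mem_inter_iff, Set.mem_Ioi, Set.mem_Icc, Set.mem_Ioc]
    exact ⟨fun ⟨htx, _, hx⟩ ↦ ⟨htx, hx⟩, fun ⟨htx, hx⟩ ↦ ⟨htx, ht.1.trans htx.le, hx⟩⟩
  have integrand_eq : ∀ x ∈ Set.Ioc t 1, reciprocalPrimitive (volume.restrict (Set.Icc 0 1))
      (fun t ↦ ENNReal.ofReal (optimalDensity t)) x ^ (1 / 2 - 1 : ℝ)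
      = ENNReal.ofReal minimalDiscrepancy⁻¹ * (ENNReal.ofReal (2 - optimalDensity x))⁻¹ := by
    intro x hx
    rw [show (1 / 2 - 1 : ℝ) = -(1 / 2) by norm_num, rpow_neg,
      reciprocalPrimitive_optimalDensity_rpow_half ⟨ht.1.trans hx.1.le, hx.2⟩,
      ENNReal.mul_inv (.inr ofReal_ne_top) (.inl ofReal_ne_top), ofReal_inv_of_pos h_min_pos]
  calc _ = ∫⁻ x in Set.Ioc t 1,
        ENNReal.ofReal minimalDiscrepancy⁻¹ * (ENNReal.ofReal (2 - optimalDensity x))⁻¹ := by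
        rw [Measure.restrict_restrict measurableSet_Ioi, inter_eq,
          setLIntegral_congr_fun measurableSet_Ioc integrand_eq]
    _ = ENNReal.ofReal
          (minimalDiscrepancy⁻¹ * (minimalDiscrepancy ^ 2 * optimalDensity t ^ 2)) := by
        rw [lintegral_const_mul' _ _ ofReal_ne_top, lintegral_inv_two_sub_optimalDensity ht,
          minimalDiscrepancy_sq, ofReal_mul (inv_nonneg.2 h_min_pos.le)]
    _ = ENNReal.ofReal minimalDiscrepancy * ENNReal.ofReal (optimalDensity t) ^ 2 := by
        rw [← ofReal_pow (optimalDensity_mem_Icc ht).1, ← ofReal_mul h_min_pos.le]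
        congr 1
        field_simp

/-- For `ρ*(t) = 1 + 2cos((1/3)arccos(2t-1) + 4π/3)` one has
`∫_0^1 (∫_0^x 1/ρ*(t) dt)^{1/2} dx = (1/2)(3/2)^{1/2}`; in particular `ρ*`
attains the minimal value of `J(ρ) = ∫_0^1 (∫_0^x 1/ρ)^{p/2} dx` with `p = 1`
over all probability densities on `[0,1]`. -/
theorem optimal_density_p_one_attains_min
    (ρstar : ℝ → ℝ)
    (hρ : ∀ t, ρstar t = 1 + 2 * Real.cos ((1 / 3) * Real.arccos (2 * t - 1)
        + 4 * Real.pi / 3)) :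
    (∫⁻ x in Set.Icc (0 : ℝ) 1,
        (∫⁻ t in Set.Ico (0 : ℝ) x, 1 / ENNReal.ofReal (ρstar t)) ^ ((1 : ℝ) / 2))
      = ENNReal.ofReal ((1 / 2) * Real.sqrt (3 / 2)) ∧
    (∀ ρ : ℝ → ℝ≥0∞, Measurable ρ →
        (∫⁻ t in Set.Icc (0 : ℝ) 1, ρ t) = 1 →
        (∫⁻ x in Set.Icc (0 : ℝ) 1,
            (∫⁻ t in Set.Ico (0 : ℝ) x, 1 / ENNReal.ofReal (ρstar t)) ^ ((1 : ℝ) / 2))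
          ≤ ∫⁻ x in Set.Icc (0 : ℝ) 1,
              (∫⁻ t in Set.Ico (0 : ℝ) x, 1 / ρ t) ^ ((1 : ℝ) / 2)) := by
  obtain rfl : ρstar = optimalDensity := funext hρ
  have optimal_value := discrepancyFunctional_optimalDensity
  have hmeas : AEMeasurable (fun t ↦ ENNReal.ofReal (optimalDensity t))
      (volume.restrict (Set.Icc 0 1)) :=
    continuous_optimalDensity.measurable.ennreal_ofReal.aemeasurable
  simp only [← discrepancyFunctional_restrict_Icc]
  refine ⟨optimal_value, fun ρ hρ_meas hρ_mass ↦ ?_⟩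
  refine discrepancyFunctional_le_of_euler_lagrange (by norm_num) hmeas hρ_meas.aemeasurable
    (optimal_value ▸ ofReal_ne_top) ?_ hρ_mass.le
  refine ae_restrict_of_forall_mem measurableSet_Icc fun t ht ↦ ?_
  rw [optimal_value, euler_lagrange_optimalDensity ht]
end

section
/- For every p ∈ [1,∞) one has ((p+2)/(p+1))^{1/2} < ((2p+2)/(p+2))^{1/p}; that is, the base α_new(p) = ((p+2)/(p+1))^{1/2} obtained from optimally chosen product sampling densities is strictly smaller than the base α_old(p) = ((2p+2)/(p+2))^{1/p} obtained from uniform sampling. -/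
/-!
Bernoulli's inequality with exponent `q = (p + 2) / 2` compares
`(1 - 1 / (p + 2)) ^ q = ((p + 1) / (p + 2)) ^ q` with its tangent value
`1 - q / (p + 2) = 1 / 2`. Inverting and dividing by `(p + 2) / (p + 1)` compares
`((p + 2) / (p + 1)) ^ (p / 2)` with `(2 * p + 2) / (p + 2)`. The direction depends on whether
`1 < q`, that is on the sign of `p`, and so does the monotonicity of the `p`-th root.
-/

theorem inv_one_sub_div_rpow_lt {q r : ℝ} (hq : 1 < q) (hr : r < 1) (hr₀ : r ≠ 0) :
    (1 - r / q)⁻¹ ^ q < (1 - r)⁻¹ := by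
  have q_pos : 0 < q := by linarith
  have ratio_lt_one : r / q < 1 := (div_lt_one q_pos).2 (hr.trans hq)
  have bernoulli : 1 + q * (-(r / q)) < (1 + -(r / q)) ^ q :=
    one_add_mul_self_lt_rpow_one_add (by linarith) (neg_ne_zero.2 (div_ne_zero hr₀ q_pos.ne')) hq
  rw [mul_neg, mul_div_cancel₀ r q_pos.ne', ← sub_eq_add_neg, ← sub_eq_add_neg] at bernoulli
  rw [Real.inv_rpow (sub_pos.2 ratio_lt_one).le]
  exact inv_strictAnti₀ (sub_pos.2 hr) bernoulli

theorem lt_inv_one_sub_div_rpow {q r : ℝ} (hq : q < 1) (hr : r < q) (hq₀ : 0 < q) (hr₀ : r ≠ 0) :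
    (1 - r)⁻¹ < (1 - r / q)⁻¹ ^ q := by
  have ratio_lt_one : r / q < 1 := (div_lt_one hq₀).2 hr
  have bernoulli : (1 + -(r / q)) ^ q < 1 + q * (-(r / q)) :=
    rpow_one_add_lt_one_add_mul_self (by linarith) (neg_ne_zero.2 (div_ne_zero hr₀ hq₀.ne')) hq₀ hq
  rw [mul_neg, mul_div_cancel₀ r hq₀.ne', ← sub_eq_add_neg, ← sub_eq_add_neg] at bernoulli
  rw [Real.inv_rpow (sub_pos.2 ratio_lt_one).le]
  exact inv_strictAnti₀ (Real.rpow_pos_of_pos (sub_pos.2 ratio_lt_one) q) bernoulli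

theorem rpow_half_eq_rpow_add_two_half_div {x : ℝ} (hx : x ≠ 0) (p : ℝ) :
    x ^ (p / 2) = x ^ ((p + 2) / 2) / x := by
  rw [← Real.rpow_sub_one hx]
  ring_nf

section

variable {p : ℝ}

theorem add_two_div_add_one_eq_inv (hp : p + 2 ≠ 0) :
    (p + 2) / (p + 1) = (1 - 1 / 2 / ((p + 2) / 2))⁻¹ := by
  rw [← inv_div]
  congr 1
  field_simp
  ring

theorem add_two_div_add_one_rpow_half_lt (hp : 0 < p) :
    ((p + 2) / (p + 1)) ^ (p / 2) < (2 * p + 2) / (p + 2) := by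
  have bernoulli : ((p + 2) / (p + 1)) ^ ((p + 2) / 2) < (1 - 1 / 2)⁻¹ := by
    rw [add_two_div_add_one_eq_inv (by linarith)]
    exact inv_one_sub_div_rpow_lt (by linarith) (by norm_num) (by norm_num)
  calc ((p + 2) / (p + 1)) ^ (p / 2)
      = ((p + 2) / (p + 1)) ^ ((p + 2) / 2) / ((p + 2) / (p + 1)) :=
        rpow_half_eq_rpow_add_two_half_div (by positivity) p
    _ < (1 - 1 / 2)⁻¹ / ((p + 2) / (p + 1)) := by gcongr
    _ = (2 * p + 2) / (p + 2) := by field_simp; ring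

theorem lt_add_two_div_add_one_rpow_half (hp : -1 < p) (hp₀ : p < 0) :
    (2 * p + 2) / (p + 2) < ((p + 2) / (p + 1)) ^ (p / 2) := by
  have bernoulli : (1 - 1 / 2)⁻¹ < ((p + 2) / (p + 1)) ^ ((p + 2) / 2) := by
    rw [add_two_div_add_one_eq_inv (by linarith)]
    exact lt_inv_one_sub_div_rpow (by linarith) (by linarith) (by linarith) (by norm_num)
  have base_pos : 0 < (p + 2) / (p + 1) := div_pos (by linarith) (by linarith)
  calc (2 * p + 2) / (p + 2)
      = (1 - 1 / 2)⁻¹ / ((p + 2) / (p + 1)) := by field_simp; ring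
    _ < ((p + 2) / (p + 1)) ^ ((p + 2) / 2) / ((p + 2) / (p + 1)) := by gcongr
    _ = ((p + 2) / (p + 1)) ^ (p / 2) := (rpow_half_eq_rpow_add_two_half_div base_pos.ne' p).symm

end

theorem alpha_new_lt_alpha_old_general (p : ℝ) (hp : -1 < p) (hp₀ : p ≠ 0) :
    ((p + 2) / (p + 1)) ^ ((1 : ℝ) / 2) < ((2 * p + 2) / (p + 2)) ^ (1 / p) := by
  have new_base_pos : 0 < (p + 2) / (p + 1) := div_pos (by linarith) (by linarith)
  have old_base_pos : 0 < (2 * p + 2) / (p + 2) := div_pos (by linarith) (by linarith)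
  have new_eq_rpow_one_div :
      ((p + 2) / (p + 1)) ^ ((1 : ℝ) / 2) = (((p + 2) / (p + 1)) ^ (p / 2)) ^ (1 / p) := by
    rw [← Real.rpow_mul new_base_pos.le]
    field_simp
  rw [new_eq_rpow_one_div]
  rcases hp₀.lt_or_gt with p_neg | p_pos
  · exact Real.rpow_lt_rpow_of_neg old_base_pos (lt_add_two_div_add_one_rpow_half hp p_neg)
      (one_div_neg.2 p_neg)
  · exact Real.rpow_lt_rpow (Real.rpow_nonneg new_base_pos.le _)
      (add_two_div_add_one_rpow_half_lt p_pos) (one_div_pos.2 p_pos)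

/-- For every `p ∈ [1,∞)` the base from optimal product sampling,
`α_new(p) = ((p+2)/(p+1))^{1/2}`, is strictly smaller than the base from
uniform sampling, `α_old(p) = ((2p+2)/(p+2))^{1/p}`. -/
theorem alpha_new_lt_alpha_old (p : ℝ) (hp : 1 ≤ p) :
    ((p + 2) / (p + 1)) ^ ((1 : ℝ) / 2) < ((2 * p + 2) / (p + 2)) ^ (1 / p) :=
  alpha_new_lt_alpha_old_general p (by linarith) (by linarith)
end

section
/- The function F(a,t) = 1/3 − a(1−t²) + a²(1−t) on ℝ × [0,1] attains its global minimum value 1/27 at (a,t) = (2/3, 1/3). Moreover, the restriction F(1,t) = 1/3 − (1−t²) + (1−t) = t² − t + 1/3 attains its minimum value 1/12 over t ∈ [0,1] at t = 1/2. -/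
/-!
For a fixed node `t ≤ 1` the squared error is a convex quadratic in the weight `a`; completing the
square gives the optimal weight `(1 + t) / 2`. What remains is a cubic in `t` that exceeds `1 / 27`
by `(t + 5 / 3) * (t - 1 / 3) ^ 2 / 4`, with a double root at the optimal node `1 / 3`. For the
weight `1` the error is `1 / 12 + (t - 1 / 2) ^ 2`.
-/

section Identities

variable {K : Type*} [Field K]

/-- The squared worst-case error of the one-point rule `f ↦ a * f t`, as a polynomial in the
weight `a` and the node `t` over any field. -/
def onePointSqError (a t : K) : K :=
  1 / 3 - a * (1 - t ^ 2) + a ^ 2 * (1 - t)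

/-- The weight minimizing the squared worst-case error of a one-point rule with node `t`; it is
`h t / K₁ t t`, where `h t = (1 - t ^ 2) / 2` and `K₁ t t = 1 - t`, extended continuously to
`t = 1`. -/
def optimalWeight (t : K) : K :=
  (1 + t) / 2

theorem onePointSqError_one_left (t : K) : onePointSqError 1 t = t ^ 2 - t + 1 / 3 := by
  unfold onePointSqError
  ring

variable [CharZero K]

theorem onePointSqError_eq_optimalWeight_add (a t : K) :
    onePointSqError a t =
      onePointSqError (optimalWeight t) t + (1 - t) * (a - optimalWeight t) ^ 2 := by
  unfold onePointSqError optimalWeight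
  field

theorem onePointSqError_optimalWeight (t : K) :
    onePointSqError (optimalWeight t) t = 1 / 27 + (t + 5 / 3) * (t - 1 / 3) ^ 2 / 4 := by
  unfold onePointSqError optimalWeight
  field

theorem onePointSqError_two_thirds_one_third :
    onePointSqError (2 / 3 : K) (1 / 3) = 1 / 27 := by
  have weight_eq : optimalWeight (1 / 3 : K) = 2 / 3 := by norm_num [optimalWeight]
  rw [← weight_eq, onePointSqError_optimalWeight, sub_self]
  ring

theorem onePointSqError_one_left_eq_add_sq (t : K) :
    onePointSqError 1 t = 1 / 12 + (t - 1 / 2) ^ 2 := by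
  rw [onePointSqError_one_left]
  field

theorem onePointSqError_one_half : onePointSqError (1 : K) (1 / 2) = 1 / 12 := by
  simp [onePointSqError_one_left_eq_add_sq]

end Identities

section Bounds

variable {K : Type*} [Field K] [LinearOrder K] [IsStrictOrderedRing K] {t : K}

theorem onePointSqError_optimalWeight_le (a : K) (ht : t ≤ 1) :
    onePointSqError (optimalWeight t) t ≤ onePointSqError a t := by
  rw [onePointSqError_eq_optimalWeight_add a t]
  exact le_add_of_nonneg_right (mul_nonneg (sub_nonneg.2 ht) (sq_nonneg _))

theorem le_onePointSqError_optimalWeight (ht : -5 / 3 ≤ t) :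
    1 / 27 ≤ onePointSqError (optimalWeight t) t := by
  have factor_nonneg : 0 ≤ t + 5 / 3 := by linarith
  rw [onePointSqError_optimalWeight]
  exact le_add_of_nonneg_right (by positivity)

theorem le_onePointSqError_one_left (t : K) : 1 / 12 ≤ onePointSqError 1 t := by
  rw [onePointSqError_one_left_eq_add_sq]
  exact le_add_of_nonneg_right (sq_nonneg _)

theorem one_point_rule_optimal_general :
    onePointSqError (2 / 3 : K) (1 / 3) = 1 / 27 ∧
    (∀ a : K, ∀ t ∈ Set.Icc (-5 / 3 : K) 1, 1 / 27 ≤ onePointSqError a t) ∧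
    onePointSqError (1 : K) (1 / 2) = 1 / 12 ∧
    (∀ t : K, onePointSqError 1 t = t ^ 2 - t + 1 / 3 ∧ 1 / 12 ≤ onePointSqError 1 t) :=
  ⟨onePointSqError_two_thirds_one_third,
    fun a _ ht ↦
      (le_onePointSqError_optimalWeight ht.1).trans (onePointSqError_optimalWeight_le a ht.2),
    onePointSqError_one_half,
    fun t ↦ ⟨onePointSqError_one_left t, le_onePointSqError_one_left t⟩⟩

end Bounds

/-- The squared worst-case error
`F(a,t) = 1/3 - a(1-t²) + a²(1-t)` of the one-point rule `f ↦ a f(t)` attains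
its global minimum `1/27` at `(a,t) = (2/3, 1/3)`, and the restriction
`F(1,t) = t² - t + 1/3` attains its minimum `1/12` over `t ∈ [0,1]` at
`t = 1/2`. -/
theorem one_point_rule_optimal
    (F : ℝ → ℝ → ℝ)
    (hF : ∀ a t, F a t = 1 / 3 - a * (1 - t ^ 2) + a ^ 2 * (1 - t)) :
    F (2 / 3) (1 / 3) = 1 / 27 ∧
    (∀ a : ℝ, ∀ t ∈ Set.Icc (0 : ℝ) 1, 1 / 27 ≤ F a t) ∧
    F 1 (1 / 2) = 1 / 12 ∧
    (∀ t ∈ Set.Icc (0 : ℝ) 1, F 1 t = t ^ 2 - t + 1 / 3 ∧ 1 / 12 ≤ F 1 t) := by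
  obtain rfl : F = onePointSqError := funext₂ hF
  obtain ⟨value, bound, value_one, bound_one⟩ := one_point_rule_optimal_general (K := ℝ)
  have nodes_subset : Set.Icc (0 : ℝ) 1 ⊆ Set.Icc (-5 / 3) 1 :=
    Set.Icc_subset_Icc_left (by norm_num)
  exact ⟨value, fun a t ht ↦ bound a t (nodes_subset ht), value_one, fun t _ ↦ bound_one t⟩
end
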